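/- arXiv:2312.10799 — 3 statements merged into one kernel-verified Lean document; each statement's English description precedes it below -/
import Mathlib

section
/- For every p ∈ ℍ and every nonzero q ∈ ℍ, there exists b ∈ ℍ with b² = -1 such that b·q commutes with p. -/
theorem quat_aux_zero_re : ((0 : Quaternion ℝ)).re = 0 := rfl
theorem quat_aux_zero_imI : ((0 : Quaternion ℝ)).imI = 0 := rfl
theorem quat_aux_zero_imJ : ((0 : Quaternion ℝ)).imJ = 0 := rfl
theorem quat_aux_zero_imK : ((0 : Quaternion ℝ)).imK = 0 := rfl
theorem quat_aux_one_re : ((1 : Quaternion ℝ)).re = 1 := rfl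
theorem quat_aux_one_imI : ((1 : Quaternion ℝ)).imI = 0 := rfl
theorem quat_aux_one_imJ : ((1 : Quaternion ℝ)).imJ = 0 := rfl
theorem quat_aux_one_imK : ((1 : Quaternion ℝ)).imK = 0 := rfl

theorem exists_sqrt_aux (p q z : Quaternion ℝ) (hq : q ≠ 0) (hz : z ≠ 0)
    (hc : z * p = p * z) (hr : (z * star q).re = 0) :
    ∃ b : Quaternion ℝ, b ^ 2 = -1 ∧ (b * q) * p = p * (b * q) := by
  have hc0 : z * star q ≠ 0 := mul_ne_zero hz (star_ne_zero.mpr hq)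
  have hn : ‖z * star q‖ ≠ 0 := norm_ne_zero_iff.mpr hc0
  have hsq : (z * star q) ^ 2 = -((‖z * star q‖ ^ 2 : ℝ) : Quaternion ℝ) := by
    have h1 := Quaternion.self_mul_star (z * star q)
    have h2 : star (z * star q) = -(z * star q) := Quaternion.star_eq_neg.mpr hr
    rw [h2, Quaternion.normSq_eq_norm_mul_self] at h1
    rw [pow_two (‖_‖), ← h1, pow_two, mul_neg, neg_neg]
  refine ⟨(‖z * star q‖⁻¹ : ℝ) • (z * star q), ?_, ?_⟩
  · rw [smul_pow, hsq, smul_neg, ← Quaternion.coe_smul, smul_eq_mul, ← mul_pow,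
      inv_mul_cancel₀ hn]
    simp
  · have : z * star q * q = (Quaternion.normSq q) • z := by
      rw [mul_assoc, Quaternion.star_mul_self, Quaternion.mul_coe_eq_smul]
    rw [smul_mul_assoc, this]
    simp only [smul_mul_assoc, mul_smul_comm, hc]

theorem exists_sqrt_neg_one_commutes (p q : Quaternion ℝ) (hq : q ≠ 0) :
    ∃ b : Quaternion ℝ, b ^ 2 = -1 ∧ (b * q) * p = p * (b * q) := by
  by_cases hv : p.im = 0
  · have hp : p = (p.re : Quaternion ℝ) := by
      have := Quaternion.re_add_im p
      rw [hv, add_zero] at this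
      exact this.symm
    obtain ⟨i, h1, h2, h3, h4⟩ : ∃ i : Quaternion ℝ, i.re = 0 ∧ i.imI = 1 ∧ i.imJ = 0 ∧ i.imK = 0 :=
      ⟨⟨0, 1, 0, 0⟩, rfl, rfl, rfl, rfl⟩
    refine ⟨i, ?_, ?_⟩
    · rw [pow_two]
      ext <;> simp [h1, h2, h3, h4, quat_aux_one_re, quat_aux_one_imI, quat_aux_one_imJ, quat_aux_one_imK]
    · rw [hp]
      exact (Quaternion.coe_commutes _ _).symm
  by_cases h0 : q.re = 0
  · exact exists_sqrt_aux p q 1 hq one_ne_zero (by simp) (by simpa using h0)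
  · have key : ∀ s t : ℝ, ((s : Quaternion ℝ) + t • p.im) * p
        = p * ((s : Quaternion ℝ) + t • p.im) := by
      intro s t
      ext <;> simp <;> ring
    refine exists_sqrt_aux p q (((p.im * star q).re : ℝ) + (-q.re) • p.im) hq ?_ (key _ _) ?_
    · intro h
      apply hv
      generalize (p.im * star q).re = s at h
      have h1 := congrArg (fun x : Quaternion ℝ => x.imI) h
      have h2 := congrArg (fun x : Quaternion ℝ => x.imJ) h
      have h3 := congrArg (fun x : Quaternion ℝ => x.imK) h
      simp [h0, quat_aux_zero_re, quat_aux_zero_imI, quat_aux_zero_imJ, quat_aux_zero_imK] at h1 h2 h3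
      ext <;> simp [h1, h2, h3,
        quat_aux_zero_re, quat_aux_zero_imI, quat_aux_zero_imJ, quat_aux_zero_imK]
    · simp
      ring
end

section
/- (Strengthened Nullstellensatz over ℍ, one variable) A polynomial F ∈ ℍ[x] vanishes on the zero locus 𝓥(I) of a left ideal I of ℍ[x] if and only if for every b ∈ ℍ with b² = -1 there exists N ≥ 1 such that (bF)^N ∈ I + I·(bF) + I·(bF)² + ⋯ + I·(bF)^N. -/
open Polynomial

namespace QNull

/-- Twisted evaluation of a product. -/
theorem eval_mul_semiconj (G H : Polynomial (Quaternion ℝ)) (p p' : Quaternion ℝ)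
    (h : p' * H.eval p = H.eval p * p) : (G * H).eval p = G.eval p' * H.eval p := by
  induction G using Polynomial.induction_on' with
  | add G₁ G₂ h₁ h₂ => rw [add_mul, eval_add, h₁, h₂, eval_add, add_mul]
  | monomial n a =>
    have hs : SemiconjBy (H.eval p) p p' := h.symm
    have hn : H.eval p * p ^ n = p' ^ n * H.eval p := (hs.pow_right n)
    rw [← C_mul_X_pow_eq_monomial, mul_assoc, X_pow_mul, eval_C_mul, eval_mul_X_pow, hn,
      eval_C_mul, eval_X_pow, mul_assoc]

/-- The left ideal of polynomials vanishing at a point. -/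
def vanish (p : Quaternion ℝ) : Ideal (Polynomial (Quaternion ℝ)) where
  carrier := {G | G.eval p = 0}
  zero_mem' := eval_zero
  add_mem' := by
    intro a b ha hb
    simp only [Set.mem_ofPred_eq] at *
    rw [eval_add, ha, hb, add_zero]
  smul_mem' := by
    intro c x hx
    simp only [Set.mem_ofPred_eq] at *
    rw [smul_eq_mul, eval_mul_semiconj c x p p (by rw [hx]; simp), hx, mul_zero]

theorem mem_vanish (p : Quaternion ℝ) (G : Polynomial (Quaternion ℝ)) :
    G ∈ vanish p ↔ G.eval p = 0 := Iff.rfl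

/-- A suitable imaginary unit. -/
theorem exists_b (p c : Quaternion ℝ) (hc : c ≠ 0) :
    ∃ b : Quaternion ℝ, b ^ 2 = -1 ∧ p * (b * c) = (b * c) * p := by
  have key : ∃ u : Quaternion ℝ, u ≠ 0 ∧ p * u = u * p ∧ (u * star c).re = 0 := by
    by_cases hre : c.re = 0
    · exact ⟨1, one_ne_zero, by simp, by simp [hre]⟩
    · have hv : ∃ v : Quaternion ℝ, p * v = v * p ∧ v.im ≠ 0 := by
        by_cases hp : p.im = 0
        · refine ⟨⟨0, 1, 0, 0⟩, ?_, ?_⟩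
          · have : p = (p.re : Quaternion ℝ) := by
              conv_lhs => rw [← Quaternion.re_add_im p, hp, add_zero]
            rw [this]
            exact (Quaternion.coe_commutes _ _)
          · intro h
            have h2 : (1 : ℝ) = 0 := congrArg (fun q : Quaternion ℝ => q.imI) h
            exact one_ne_zero h2
        · exact ⟨p, rfl, hp⟩
      obtain ⟨v, hv, hvi⟩ := hv
      refine ⟨((v * star c).re : Quaternion ℝ) - (c.re : Quaternion ℝ) * v, ?_, ?_, ?_⟩
      · intro h
        apply hvi
        have h2 : c.re • v.im = 0 := by
          rw [sub_eq_zero] at h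
          have hvv : v = ((c.re⁻¹ * (v * star c).re : ℝ) : Quaternion ℝ) := by
            rw [Quaternion.coe_mul, h, ← mul_assoc, ← Quaternion.coe_mul, inv_mul_cancel₀ hre]
            simp
          rw [hvv, Quaternion.im_coe, smul_zero]
        exact (smul_eq_zero.mp h2).resolve_left hre
      · rw [mul_sub, sub_mul, ← mul_assoc, ← Quaternion.coe_commutes c.re p, mul_assoc, hv,
          ← Quaternion.coe_commutes _ p, mul_assoc]
      · rw [sub_mul, mul_assoc, Quaternion.re_sub, Quaternion.coe_mul_eq_smul,
          Quaternion.coe_mul_eq_smul, Quaternion.re_smul, Quaternion.re_smul]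
        simp only [smul_eq_mul, Quaternion.re_star]
        ring
  obtain ⟨u, hu, hpu, hr⟩ := key
  set b' := u * star c with hb'
  have hb0 : b' ≠ 0 := mul_ne_zero hu (star_ne_zero.mpr hc)
  have hsq : b' ^ 2 = -((Quaternion.normSq b' : ℝ) : Quaternion ℝ) :=
    Quaternion.sq_eq_neg_normSq.mpr hr
  have hpos : 0 < Quaternion.normSq b' :=
    lt_of_le_of_ne Quaternion.normSq_nonneg (Ne.symm (Quaternion.normSq_ne_zero.mpr hb0))
  set s := (Real.sqrt (Quaternion.normSq b'))⁻¹ with hs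
  refine ⟨s • b', ?_, ?_⟩
  · rw [_root_.smul_pow, hsq, smul_neg, ← Quaternion.coe_mul_eq_smul, ← Quaternion.coe_mul, hs, inv_pow,
      Real.sq_sqrt hpos.le, inv_mul_cancel₀ hpos.ne']
    simp
  · have : b' * c = Quaternion.normSq c • u := by
      rw [hb', mul_assoc, Quaternion.star_mul_self, ← Quaternion.coe_commutes,
        Quaternion.coe_mul_eq_smul]
    rw [smul_mul_assoc, this, mul_smul_comm, mul_smul_comm, hpu, smul_mul_assoc, smul_mul_assoc]

/-- The easy direction. -/
theorem backward (I : Ideal (Polynomial (Quaternion ℝ))) (F : Polynomial (Quaternion ℝ))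
    (H : ∀ b : Quaternion ℝ, b ^ 2 = -1 → ∃ N : ℕ, 1 ≤ N ∧
      ∃ G : Fin (N + 1) → Polynomial (Quaternion ℝ), (∀ m, G m ∈ I) ∧
        (C b * F) ^ N = ∑ m : Fin (N + 1), G m * (C b * F) ^ (m : ℕ))
    (p : Quaternion ℝ) (hp : ∀ G ∈ I, G.eval p = 0) : F.eval p = 0 := by
  by_contra hc
  obtain ⟨b, hb, hcomm⟩ := exists_b p _ hc
  obtain ⟨N, -, G, hG, hN⟩ := H b hb
  have hbF : (C b * F).eval p = b * F.eval p := eval_C_mul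
  have hpow : ∀ n : ℕ, ((C b * F) ^ n).eval p = (b * F.eval p) ^ n := by
    intro n
    induction n with
    | zero => simp
    | succ n ih =>
      rw [pow_succ, eval_mul_semiconj _ _ p p (by rw [hbF, hcomm]), ih, hbF, pow_succ]
  have h1 := congrArg (Polynomial.eval p) hN
  rw [hpow, eval_finsetSum, Finset.sum_eq_zero] at h1
  · have hb0 : b ≠ 0 := by
      rintro rfl
      rw [zero_pow two_ne_zero] at hb
      exact one_ne_zero (neg_eq_zero.mp hb.symm)
    exact pow_ne_zero N (mul_ne_zero hb0 hc) h1
  · intro m _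
    have hc' : p * (b * F.eval p) ^ (m : ℕ) = (b * F.eval p) ^ (m : ℕ) * p :=
      (show Commute p (b * F.eval p) from hcomm).pow_right _
    rw [eval_mul_semiconj _ _ p p (by rw [hpow, hc']), hp _ (hG m), zero_mul]

/-- Left division with remainder. -/
theorem left_div (g : Polynomial (Quaternion ℝ)) (hg : g ≠ 0) (n : ℕ) :
    ∀ a : Polynomial (Quaternion ℝ), a.natDegree < n →
      ∃ q r : Polynomial (Quaternion ℝ), a = q * g + r ∧ r.degree < g.degree := by
  induction n with
  | zero => intro a h; omega
  | succ n ih =>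
    intro a ha
    by_cases hd : a.degree < g.degree
    · exact ⟨0, a, by simp, hd⟩
    · have hd' : g.degree ≤ a.degree := not_lt.mp hd
      have ha0 : a ≠ 0 := by
        rintro rfl
        simp at hd'
        exact hg hd'
      set t : Polynomial (Quaternion ℝ) :=
        C (a.leadingCoeff * g.leadingCoeff⁻¹) * X ^ (a.natDegree - g.natDegree) with ht
      have hlc : a.leadingCoeff * g.leadingCoeff⁻¹ ≠ 0 :=
        mul_ne_zero (leadingCoeff_ne_zero.mpr ha0) (inv_ne_zero (leadingCoeff_ne_zero.mpr hg))
      have hle := natDegree_le_natDegree hd'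
      have hdt : (t * g).degree = a.degree := by
        rw [degree_mul, ht, degree_C_mul_X_pow _ hlc, degree_eq_natDegree hg,
          degree_eq_natDegree ha0, ← Nat.cast_add, Nat.sub_add_cancel hle]
      have hlt : (t * g).leadingCoeff = a.leadingCoeff := by
        rw [leadingCoeff_mul, ht, leadingCoeff_C_mul_X_pow, mul_assoc,
          inv_mul_cancel₀ (leadingCoeff_ne_zero.mpr hg), mul_one]
      have hsub := degree_sub_lt_left hdt.symm ha0 hlt.symm
      by_cases hz : a - t * g = 0
      · exact ⟨t, 0, by rw [add_zero]; exact sub_eq_zero.mp hz, by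
          rw [degree_zero]; exact bot_lt_iff_ne_bot.mpr (degree_ne_bot.mpr hg)⟩
      · have := natDegree_lt_natDegree hz hsub
        obtain ⟨q, r, hqr, hr⟩ := ih (a - t * g) (by omega)
        exact ⟨t + q, r, by rw [add_mul, add_assoc, ← hqr]; abel, hr⟩

/-- Any polynomial is algebraic over the reals modulo a nonzero left ideal. -/
theorem exists_aeval_mem (J : Ideal (Polynomial (Quaternion ℝ))) (hJ : J ≠ ⊥)
    (A : Polynomial (Quaternion ℝ)) : ∃ P : Polynomial ℝ, P ≠ 0 ∧ aeval A P ∈ J := by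
  obtain ⟨g, hgJ, hg⟩ := Submodule.exists_mem_ne_zero_of_ne_bot hJ
  let π : Polynomial (Quaternion ℝ) →ₗ[ℝ] (Polynomial (Quaternion ℝ) ⧸ J.restrictScalars ℝ) :=
    (J.restrictScalars ℝ).mkQ
  let D : Submodule ℝ (Polynomial (Quaternion ℝ)) :=
    (degreeLT (Quaternion ℝ) g.natDegree).restrictScalars ℝ
  have : Module.Finite (Quaternion ℝ) (degreeLT (Quaternion ℝ) g.natDegree) :=
    Module.Finite.equiv (degreeLTEquiv (Quaternion ℝ) g.natDegree).symm
  have : Module.Finite ℝ (degreeLT (Quaternion ℝ) g.natDegree) :=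
    Module.Finite.trans (Quaternion ℝ) _
  have : Module.Finite ℝ D := this
  have hsurj : Function.Surjective (π.comp D.subtype) := by
    intro y
    obtain ⟨a, rfl⟩ := (J.restrictScalars ℝ).mkQ_surjective y
    obtain ⟨q, r, hqr, hr⟩ := left_div g hg (a.natDegree + 1) a (Nat.lt_succ_self _)
    refine ⟨⟨r, ?_⟩, ?_⟩
    · change r ∈ degreeLT (Quaternion ℝ) g.natDegree
      rw [mem_degreeLT, ← degree_eq_natDegree hg]
      exact hr
    · change (J.restrictScalars ℝ).mkQ r = (J.restrictScalars ℝ).mkQ a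
      rw [← sub_eq_zero, ← map_sub, Submodule.mkQ_apply, Submodule.Quotient.mk_eq_zero]
      change r - a ∈ J
      rw [hqr, sub_add_cancel_right]
      exact J.neg_mem (J.mul_mem_left q hgJ)
  have : Module.Finite ℝ (Polynomial (Quaternion ℝ) ⧸ J.restrictScalars ℝ) :=
    Module.Finite.of_surjective _ hsurj
  by_contra hcon
  push Not at hcon
  have hinj : Function.Injective (π.comp (aeval A).toLinearMap) := by
    rw [← LinearMap.ker_eq_bot, LinearMap.ker_eq_bot']
    intro P hP
    by_contra hP0
    apply hcon P hP0
    change (J.restrictScalars ℝ).mkQ (aeval A P) = 0 at hP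
    rw [Submodule.mkQ_apply, Submodule.Quotient.mk_eq_zero] at hP
    exact hP
  have : Module.Finite ℝ (Polynomial ℝ) := Module.Finite.of_injective _ hinj
  exact Polynomial.not_finite this

/-- A maximal nonzero left ideal has a zero. -/
theorem exists_zero_of_maximal (K : Ideal (Polynomial (Quaternion ℝ))) (hK : K ≠ ⊥)
    (h1 : (1 : Polynomial (Quaternion ℝ)) ∉ K)
    (hmax : ∀ a, a ∉ K → ∃ r : Polynomial (Quaternion ℝ), 1 - r * a ∈ K) :
    ∃ p : Quaternion ℝ, ∀ G, G ∈ K ↔ G.eval p = 0 := by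
  obtain ⟨P, hP0, hP⟩ := exists_aeval_mem K hK X
  let ι : Polynomial ℂ →+* Polynomial (Quaternion ℝ) :=
    Polynomial.mapRingHom (Quaternion.ofComplex : ℂ →ₐ[ℝ] Quaternion ℝ).toRingHom
  have hex : ∃ n : ℕ, ∃ Q : Polynomial ℂ, Q ≠ 0 ∧ ι Q ∈ K ∧ Q.natDegree = n := by
    refine ⟨_, P.map (algebraMap ℝ ℂ), (Polynomial.map_ne_zero_iff
      (algebraMap ℝ ℂ).injective).mpr hP0, ?_, rfl⟩
    have : ι (P.map (algebraMap ℝ ℂ)) = aeval X P := by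
      change Polynomial.map _ (P.map _) = _
      rw [Polynomial.map_map]
      have : (Quaternion.ofComplex : ℂ →ₐ[ℝ] Quaternion ℝ).toRingHom.comp (algebraMap ℝ ℂ)
          = algebraMap ℝ (Quaternion ℝ) := (Quaternion.ofComplex).comp_algebraMap
      rw [this]
      rfl
    rwa [this]
  classical
  obtain ⟨Q, hQ0, hQK, hQn⟩ := Nat.find_spec hex
  have hmin : ∀ R : Polynomial ℂ, R ≠ 0 → ι R ∈ K → Q.natDegree ≤ R.natDegree := by
    intro R hR hRK
    rw [hQn]
    exact Nat.find_min' hex ⟨R, hR, hRK, rfl⟩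
  have hdeg : Q.degree ≠ 0 := by
    intro hd
    rw [eq_C_of_degree_eq_zero hd] at hQK hQ0
    have hq : Q.coeff 0 ≠ 0 := fun h => hQ0 (by rw [h, C_0])
    apply h1
    have := K.mul_mem_left (ι (C (Q.coeff 0)⁻¹)) hQK
    rwa [← map_mul, ← C_mul, inv_mul_cancel₀ hq, C_1, map_one] at this
  obtain ⟨lam, hlam⟩ := IsAlgClosed.exists_root Q hdeg
  obtain ⟨R, hR⟩ := dvd_iff_isRoot.mpr hlam
  have hR0 : R ≠ 0 := by
    rintro rfl
    exact hQ0 (by rw [hR, mul_zero])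
  have hRK : ι R ∉ K := by
    intro h
    have := hmin R hR0 h
    rw [hR, natDegree_mul (X_sub_C_ne_zero _) hR0, natDegree_X_sub_C] at this
    omega
  set l : Quaternion ℝ := Quaternion.ofComplex lam with hl
  set a := ι R with ha
  have hla : (X - C l) * a ∈ K := by
    have : ι (X - C lam) = X - C l := by
      change Polynomial.map _ (X - C lam) = _
      simp [hl]
    rw [← this, ha, ← map_mul, ← hR]
    exact hQK
  -- the annihilator of `a` modulo `K`
  have hfac : ∀ s : Polynomial (Quaternion ℝ),
      ∃ q, s = q * (X - C l) + C (s.eval l) := by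
    intro s
    obtain ⟨q, r, hqr, hr⟩ := left_div (X - C l) (X_sub_C_ne_zero l) (s.natDegree + 1) s
      (Nat.lt_succ_self _)
    rw [degree_X_sub_C] at hr
    have hrc : r = C (r.coeff 0) := eq_C_of_degree_le_zero (by
      by_cases h0 : r = 0
      · simp [h0]
      · rw [degree_eq_natDegree h0] at hr ⊢
        norm_cast at hr ⊢
        omega)
    refine ⟨q, ?_⟩
    have he : s.eval l = r.coeff 0 := by
      rw [hqr, hrc, eval_add, eval_mul_semiconj q (X - C l) l l (by simp)]
      simp
    rw [he, ← hrc]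
    exact hqr
  have hann : ∀ s : Polynomial (Quaternion ℝ), s * a ∈ K ↔ s.eval l = 0 := by
    intro s
    obtain ⟨q, hq⟩ := hfac s
    have h2 : s * a = q * ((X - C l) * a) + C (s.eval l) * a := by
      conv_lhs => rw [hq]
      rw [add_mul, mul_assoc]
    constructor
    · intro hs
      by_contra hne
      apply hRK
      rw [h2, K.add_mem_iff_right (K.mul_mem_left q hla)] at hs
      have := K.mul_mem_left (C (s.eval l)⁻¹) hs
      rwa [← mul_assoc, ← C_mul, inv_mul_cancel₀ hne, C_1, one_mul] at this
    · intro hs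
      rw [h2, hs, C_0, zero_mul, add_zero]
      exact K.mul_mem_left q hla
  obtain ⟨r, hr⟩ := hmax a hRK
  have hmem : ∀ s : Polynomial (Quaternion ℝ), s ∈ K ↔ (s * r) * a ∈ K := by
    intro s
    have h3 : s = s * (1 - r * a) + (s * r) * a := by
      rw [mul_sub, mul_one, mul_assoc, sub_add_cancel]
    conv_lhs => rw [h3]
    exact K.add_mem_iff_right (K.mul_mem_left s hr)
  have hh : r.eval l ≠ 0 := by
    intro h
    apply h1
    rw [hmem 1, one_mul, hann, h]
  refine ⟨r.eval l * l * (r.eval l)⁻¹, ?_⟩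
  intro G
  rw [hmem, hann, eval_mul_semiconj G r l (r.eval l * l * (r.eval l)⁻¹)
    (by rw [mul_assoc, inv_mul_cancel₀ hh, mul_one])]
  simp [hh]

/-- A polynomial vanishing everywhere is zero. -/
theorem eq_zero_of_eval (F : Polynomial (Quaternion ℝ)) (h : ∀ p, F.eval p = 0) : F = 0 := by
  ext1 n
  rw [coeff_zero]
  let L : Quaternion ℝ →+ ℝ :=
    { toFun := fun c => (c * star (F.coeff n)).re
      map_zero' := by rw [zero_mul]; rfl
      map_add' := by intro x y; rw [add_mul, Quaternion.re_add] }
  let P : Polynomial ℝ := ∑ i ∈ F.support, monomial i (L (F.coeff i))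
  have hP : P = 0 := by
    apply Polynomial.funext
    intro t
    have h2 := congrArg L (h (t : Quaternion ℝ))
    rw [eval_eq_sum, Polynomial.sum, map_sum, map_zero] at h2
    rw [eval_zero, eval_finsetSum, ← h2]
    apply Finset.sum_congr rfl
    intro i _
    rw [eval_monomial]
    change _ = (F.coeff i * (t : Quaternion ℝ) ^ i * star (F.coeff n)).re
    rw [← Quaternion.coe_pow, ← Quaternion.coe_commutes, mul_assoc, Quaternion.coe_mul_eq_smul,
      Quaternion.re_smul, smul_eq_mul, mul_comm]
    rfl
  have hc : P.coeff n = L (F.coeff n) := by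
    simp only [P, finsetSum_coeff, coeff_monomial]
    rw [Finset.sum_ite_eq']
    split_ifs with hn
    · rfl
    · rw [notMem_support_iff.mp hn, map_zero]
  rw [hP, coeff_zero] at hc
  have : Quaternion.normSq (F.coeff n) = 0 := by
    rw [Quaternion.normSq_def]
    exact hc.symm
  exact Quaternion.normSq_eq_zero.mp this

/-- Main step for ideals stable under right multiplication by `F`. -/
theorem pow_mem (J : Ideal (Polynomial (Quaternion ℝ))) (F : Polynomial (Quaternion ℝ))
    (hJF : ∀ a ∈ J, a * F ∈ J)
    (hF : ∀ p : Quaternion ℝ, (∀ G ∈ J, G.eval p = 0) → F.eval p = 0) :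
    ∃ n : ℕ, F ^ n ∈ J := by
  by_cases hJ : J = ⊥
  · subst hJ
    have : F = 0 := eq_zero_of_eval F (fun p => hF p (by
      intro G hG
      rw [(Submodule.mem_bot _).mp hG, eval_zero]))
    exact ⟨1, by rw [this]; simp⟩
  have hJn : ∀ n : ℕ, ∀ a ∈ J, a * F ^ n ∈ J := by
    intro n
    induction n with
    | zero => intro a ha; simpa using ha
    | succ n ih =>
      intro a ha
      rw [pow_succ, ← mul_assoc]
      exact hJF _ (ih a ha)
  obtain ⟨P, hP0, hP⟩ := exists_aeval_mem J hJ F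
  -- split off the power of `X`
  obtain ⟨n, P', hP', hPP⟩ : ∃ (n : ℕ) (P' : Polynomial ℝ), P'.coeff 0 ≠ 0 ∧ P = P' * X ^ n := by
    obtain ⟨R, hR, hnd⟩ := Polynomial.exists_eq_pow_rootMultiplicity_mul_and_not_dvd P hP0 0
    rw [C_0, sub_zero] at hR hnd
    exact ⟨_, R, fun h => hnd (X_dvd_iff.mpr h), by rw [mul_comm]; exact hR⟩
  have hstab : ∃ w : Polynomial (Quaternion ℝ), F ^ n - w * F ^ (n + 1) ∈ J := by
    have h1 : P' = divX P' * X + C (P'.coeff 0) := (divX_mul_X_add P').symm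
    set c := P'.coeff 0 with hc
    have h2 : aeval F P = (aeval F (divX P')) * F ^ (n + 1) + c • F ^ n := by
      rw [hPP, map_mul, map_pow, aeval_X]
      conv_lhs => rw [h1]
      rw [map_add, map_mul, aeval_X, aeval_C, add_mul, mul_assoc, ← pow_succ', Algebra.smul_def]
    refine ⟨-(c⁻¹ • aeval F (divX P')), ?_⟩
    have h3 := (J.restrictScalars ℝ).smul_mem c⁻¹ hP
    rw [h2, smul_add, smul_smul, inv_mul_cancel₀ hP', one_smul, ← smul_mul_assoc] at h3
    rw [neg_mul, sub_neg_eq_add, add_comm]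
    exact h3
  obtain ⟨w, hw⟩ := hstab
  refine ⟨n, ?_⟩
  by_contra hn
  -- a left ideal maximal among those containing `J` and avoiding `F ^ n`
  obtain ⟨Q, hJQ, hQ⟩ := zorn_le_nonempty₀
    {Q : Ideal (Polynomial (Quaternion ℝ)) | J ≤ Q ∧ F ^ n ∉ Q} (by
      intro c hc hchain y hy
      refine ⟨sSup c, ⟨(hc hy).1.trans (le_sSup hy), ?_⟩, fun z hz => le_sSup hz⟩
      intro hmem
      rw [Submodule.mem_sSup_of_directed ⟨y, hy⟩ hchain.directedOn] at hmem
      obtain ⟨z, hz, hzm⟩ := hmem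
      exact (hc hz).2 hzm) J ⟨le_rfl, hn⟩
  have hQn : F ^ n ∉ Q := hQ.prop.2
  let K : Ideal (Polynomial (Quaternion ℝ)) :=
    Submodule.comap (LinearMap.toSpanSingleton (Polynomial (Quaternion ℝ)) _ (F ^ n)) Q
  have hKmem : ∀ a, a ∈ K ↔ a * F ^ n ∈ Q := fun a => Iff.rfl
  have hJK : J ≤ K := fun a ha => (hKmem a).mpr (hJQ (hJn n a ha))
  have hmax : ∀ a, a ∉ K → ∃ r : Polynomial (Quaternion ℝ), 1 - r * a ∈ K := by
    intro a ha
    rw [hKmem] at ha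
    have hFm : F ^ n ∈ Q ⊔ Ideal.span {a * F ^ n} := by
      by_contra hcon
      have hle := hQ.le_of_ge (y := Q ⊔ Ideal.span {a * F ^ n})
        ⟨hJQ.trans le_sup_left, hcon⟩ le_sup_left
      exact ha (hle (Ideal.mem_sup_right (Ideal.subset_span rfl)))
    obtain ⟨y, hy, z, hz, hyz⟩ := Submodule.mem_sup.mp hFm
    obtain ⟨r, rfl⟩ := Ideal.mem_span_singleton'.mp hz
    refine ⟨r, ?_⟩
    rw [hKmem, sub_mul, one_mul, mul_assoc]
    rw [← eq_sub_iff_add_eq.mpr hyz]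
    exact hy
  obtain ⟨p, hp⟩ := exists_zero_of_maximal K
    (fun h => hJ (le_bot_iff.mp (h ▸ hJK)))
    (by rw [hKmem, one_mul]; exact hQn) hmax
  have hFK : F ∈ K := (hp F).mpr (hF p (fun G hG => (hp G).mp (hJK hG)))
  rw [hKmem, ← pow_succ'] at hFK
  apply hQn
  have := Q.add_mem (hJQ hw) (Q.mul_mem_left w hFK)
  rwa [sub_add_cancel] at this

theorem forward (I : Ideal (Polynomial (Quaternion ℝ))) (F : Polynomial (Quaternion ℝ))
    (hF : ∀ p : Quaternion ℝ, (∀ G ∈ I, G.eval p = 0) → F.eval p = 0) :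
    ∃ N : ℕ, 1 ≤ N ∧ ∃ G : Fin (N + 1) → Polynomial (Quaternion ℝ), (∀ m, G m ∈ I) ∧
        F ^ N = ∑ m : Fin (N + 1), G m * F ^ (m : ℕ) := by
  let M : ℕ → Ideal (Polynomial (Quaternion ℝ)) := fun m =>
    Submodule.map (LinearMap.toSpanSingleton (Polynomial (Quaternion ℝ)) _ (F ^ m)) I
  have hM : ∀ m a, a ∈ M m ↔ ∃ i ∈ I, i * F ^ m = a := fun m a => Iff.rfl
  let J := ⨆ m, M m
  have hIJ : I ≤ J := fun a ha => (le_iSup M 0) ((hM 0 a).mpr ⟨a, ha, by simp⟩)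
  have hJF : ∀ a ∈ J, a * F ∈ J := by
    have : J ≤ Submodule.comap
        (LinearMap.toSpanSingleton (Polynomial (Quaternion ℝ)) _ F) J := by
      refine iSup_le fun m => ?_
      intro a ha
      obtain ⟨i, hi, rfl⟩ := (hM m a).mp ha
      change i * F ^ m * F ∈ J
      rw [mul_assoc, ← pow_succ]
      exact (le_iSup M (m + 1)) ((hM _ _).mpr ⟨i, hi, rfl⟩)
    exact fun a ha => this ha
  obtain ⟨n, hn⟩ := pow_mem J F hJF (fun p hp => hF p (fun G hG => hp G (hIJ hG)))
  obtain ⟨f, hf, hsum⟩ := (Submodule.mem_iSup_iff_exists_finsupp M _).mp hn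
  choose i hi hif using fun m => (hM m (f m)).mp (hf m)
  let N := n + 1 + f.support.sup id
  refine ⟨N, by omega, fun m => F ^ (N - n) * i m, fun m => I.mul_mem_left _ (hi m), ?_⟩
  have h1 : F ^ n = ∑ m ∈ Finset.range (N + 1), i m * F ^ m := by
    rw [← hsum]
    rw [Finsupp.sum_of_support_subset f (s := Finset.range (N + 1)) _ _ (by simp)]
    · exact Finset.sum_congr rfl fun m _ => (hif m).symm
    · intro m hm
      have : m ≤ f.support.sup id := Finset.le_sup (f := id) hm
      rw [Finset.mem_range]
      omega
  rw [Fin.sum_univ_eq_sum_range (fun m => F ^ (N - n) * i m * F ^ m)]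
  simp_rw [mul_assoc]
  rw [← Finset.mul_sum, ← h1, ← pow_add]
  congr 1
  omega

end QNull

theorem nullstellensatz_quaternions_strengthened (I : Ideal (Polynomial (Quaternion ℝ)))
    (F : Polynomial (Quaternion ℝ)) :
    (∀ p : Quaternion ℝ, (∀ G ∈ I, G.eval p = 0) → F.eval p = 0) ↔
    (∀ b : Quaternion ℝ, b ^ 2 = -1 → ∃ N : ℕ, 1 ≤ N ∧
      ∃ G : Fin (N + 1) → Polynomial (Quaternion ℝ), (∀ m, G m ∈ I) ∧
        (C b * F) ^ N = ∑ m : Fin (N + 1), G m * (C b * F) ^ (m : ℕ)) := by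
  constructor
  · intro h b _
    exact QNull.forward I (C b * F) (fun p hp => by rw [eval_C_mul, h p hp, mul_zero])
  · intro H p hp
    exact QNull.backward I F H p hp
end

section
/- (Rabinowitsch step, one variable) Let I be a left ideal of ℍ[x] and let F ∈ ℍ[x] vanish on 𝓥(I). Then the left ideal of ℍ[x][y] (y a second central indeterminate, commuting with x and with ℍ[x]) generated by I together with the polynomial F·y - 1 is all of ℍ[x][y]. -/
open Polynomial

lemma rab_sub_mem (p : Quaternion ℝ) (M : Ideal (Polynomial (Quaternion ℝ)))
    (hp : X - C p ∈ M) (f : Polynomial (Quaternion ℝ)) : f - C (f.eval p) ∈ M := by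
  induction f using Polynomial.induction_on' with
  | add a b ha hb =>
    have := M.add_mem ha hb
    rw [eval_add, C_add]
    convert this using 1
    abel
  | monomial n a =>
    have key : ∀ n : ℕ, (X ^ n - C (p ^ n) : Polynomial (Quaternion ℝ)) ∈ M := by
      intro n
      induction n with
      | zero => simp
      | succ n ih =>
        have h1 := M.mul_mem_left (X ^ n) hp
        have h2 := M.mul_mem_left (C p) ih
        have h3 := M.add_mem h1 h2
        convert h3 using 1
        rw [pow_succ, pow_succ', C_mul, mul_sub, mul_sub, X_pow_mul_C]
        abel
    have := M.mul_mem_left (C a) (key n)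
    rw [eval_monomial, ← C_mul_X_pow_eq_monomial, C_mul, ← mul_sub]
    exact this

lemma rab_functional (F : Polynomial (Quaternion ℝ)) (hF : ∀ p : Quaternion ℝ, F.eval p = 0)
    (l : Quaternion ℝ →ₗ[ℝ] ℝ) (n : ℕ) : l (F.coeff n) = 0 := by
  let P : Polynomial ℝ := ∑ i ∈ Finset.range (F.natDegree + 1), monomial i (l (F.coeff i))
  have hP : P = 0 := by
    apply Polynomial.funext
    intro t
    have h := congrArg l (hF (algebraMap ℝ (Quaternion ℝ) t))
    rw [eval_eq_sum_range, map_sum, map_zero] at h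
    rw [eval_zero, eval_finset_sum, ← h]
    refine Finset.sum_congr rfl fun i _ => ?_
    rw [eval_monomial, ← map_pow, ← Algebra.commutes, ← Algebra.smul_def, map_smul, smul_eq_mul,
      mul_comm]
  by_cases hn : n ∈ Finset.range (F.natDegree + 1)
  · have h := congrArg (fun Q => Polynomial.coeff Q n) hP
    simp only [P, finset_sum_coeff, coeff_monomial, coeff_zero] at h
    rw [Finset.sum_ite_eq' (Finset.range (F.natDegree + 1)) n] at h
    simpa only [hn, if_true] using h
  · rw [coeff_eq_zero_of_natDegree_lt (by simpa using hn), map_zero]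

lemma rab_zero (F : Polynomial (Quaternion ℝ)) (hF : ∀ p : Quaternion ℝ, F.eval p = 0) :
    F = 0 := by
  ext n
  · exact rab_functional F hF (QuaternionAlgebra.reₗ _ _ _) n
  · exact rab_functional F hF (QuaternionAlgebra.imIₗ _ _ _) n
  · exact rab_functional F hF (QuaternionAlgebra.imJₗ _ _ _) n
  · exact rab_functional F hF (QuaternionAlgebra.imKₗ _ _ _) n

lemma rab_finite (L : Ideal (Polynomial (Quaternion ℝ))) (hL : L ≠ ⊥) :
    Module.Finite (Quaternion ℝ) (Polynomial (Quaternion ℝ) ⧸ L) := by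
  obtain ⟨g, hg, hg0⟩ := Submodule.exists_mem_ne_zero_of_ne_bot hL
  have key : ∀ (m : ℕ) (f : Polynomial (Quaternion ℝ)), f.natDegree < m →
      ∃ r ∈ degreeLT (Quaternion ℝ) g.natDegree, f - r ∈ L := by
    intro m
    induction m with
    | zero => intro f hf; omega
    | succ m ih =>
      intro f hf
      by_cases hlt : f.degree < g.natDegree
      · exact ⟨f, mem_degreeLT.2 hlt, by simp⟩
      · have hf0 : f ≠ 0 := by
          rintro rfl
          apply hlt
          simp
        have hge : g.natDegree ≤ f.natDegree := by
          rw [degree_eq_natDegree hf0] at hlt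
          exact_mod_cast not_lt.1 hlt
        set s : Polynomial (Quaternion ℝ) :=
          C (f.leadingCoeff * g.leadingCoeff⁻¹) * X ^ (f.natDegree - g.natDegree) with hs
        have hc : f.leadingCoeff * g.leadingCoeff⁻¹ ≠ 0 := by
          simp [hf0, hg0]
        have hs0 : s ≠ 0 := by
          rw [hs, C_mul_X_pow_eq_monomial]
          simpa using hc
        have hsl : s.leadingCoeff = f.leadingCoeff * g.leadingCoeff⁻¹ := by
          rw [hs, leadingCoeff_C_mul_X_pow]
        have hsd : s.natDegree = f.natDegree - g.natDegree := by
          rw [hs, natDegree_C_mul_X_pow _ _ hc]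
        have hdeg : f.degree = (s * g).degree := by
          rw [degree_eq_natDegree hf0, degree_eq_natDegree (mul_ne_zero hs0 hg0),
            natDegree_mul hs0 hg0, hsd]
          congr 1; omega
        have hlc : f.leadingCoeff = (s * g).leadingCoeff := by
          rw [leadingCoeff_mul, hsl, mul_assoc, inv_mul_cancel₀ (by simpa using hg0), mul_one]
        have hlt2 := degree_sub_lt_left hdeg hf0 hlc
        have hmem : s * g ∈ L := L.mul_mem_left s hg
        by_cases h0 : f - s * g = 0
        · refine ⟨0, Submodule.zero_mem _, ?_⟩
          rw [sub_zero, sub_eq_zero.1 h0]; exact hmem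
        · have := natDegree_lt_natDegree h0 hlt2
          obtain ⟨r, hr, hr2⟩ := ih (f - s * g) (by omega)
          refine ⟨r, hr, ?_⟩
          have := L.add_mem hr2 hmem
          convert this using 1
          abel
  have hfin : Module.Finite (Quaternion ℝ) (degreeLT (Quaternion ℝ) g.natDegree) :=
    Module.Finite.equiv (degreeLTEquiv (Quaternion ℝ) g.natDegree).symm
  refine Module.Finite.of_surjective
    (((Submodule.mkQ L).restrictScalars (Quaternion ℝ)).comp
      (degreeLT (Quaternion ℝ) g.natDegree).subtype) ?_
  intro v
  obtain ⟨f, rfl⟩ := Submodule.mkQ_surjective L v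
  obtain ⟨r, hr, hr2⟩ := key (f.natDegree + 1) f (by omega)
  refine ⟨⟨r, hr⟩, ?_⟩
  symm
  exact (Submodule.Quotient.eq L).2 hr2

lemma rab_eigen (M : Ideal (Polynomial (Quaternion ℝ))) (hM : M ≠ ⊤) (hM0 : M ≠ ⊥) :
    ∃ (l : Quaternion ℝ) (r : Polynomial (Quaternion ℝ)), r ∉ M ∧ (X - C l) * r ∈ M := by
  have hf := rab_finite M hM0
  have hfR : Module.Finite ℝ (Polynomial (Quaternion ℝ) ⧸ M) :=
    Module.Finite.trans (Quaternion ℝ) _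
  let _ : Module ℂ (Polynomial (Quaternion ℝ) ⧸ M) :=
    Module.compHom _ (Quaternion.ofComplex : ℂ →ₐ[ℝ] Quaternion ℝ).toRingHom
  have hsm : ∀ (c : ℂ) (v : Polynomial (Quaternion ℝ) ⧸ M),
    c • v = (Quaternion.ofComplex c) • v := fun _ _ => rfl
  have : IsScalarTower ℝ ℂ (Polynomial (Quaternion ℝ) ⧸ M) := by
    constructor
    intro a b v
    rw [hsm, hsm, map_smul, smul_assoc]
  have : Module.Finite ℂ (Polynomial (Quaternion ℝ) ⧸ M) :=
    Module.Finite.of_restrictScalars_finite ℝ ℂ _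
  have : Nontrivial (Polynomial (Quaternion ℝ) ⧸ M) :=
    Submodule.Quotient.nontrivial_iff.2 hM
  have hCs : ∀ (q : Quaternion ℝ) (v : Polynomial (Quaternion ℝ) ⧸ M), q • v = C q • v := by
    intro q v
    obtain ⟨f, rfl⟩ := Submodule.mkQ_surjective M v
    have h : Submodule.mkQ M (q • f) = Submodule.mkQ M (C q • f) := by
      rw [smul_eq_mul, ← smul_eq_C_mul]
    exact h
  let T : (Polynomial (Quaternion ℝ) ⧸ M) →ₗ[ℂ] (Polynomial (Quaternion ℝ) ⧸ M) :=
    { toFun := fun v => (X : Polynomial (Quaternion ℝ)) • v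
      map_add' := fun a b => smul_add _ _ _
      map_smul' := by
        intro c v
        simp only [RingHom.id_apply]
        rw [hsm, hsm, hCs, hCs, smul_smul, smul_smul, X_mul_C] }
  obtain ⟨c, hc⟩ := Module.End.exists_eigenvalue T
  obtain ⟨v, hv⟩ := hc.exists_hasEigenvector
  have h1 : (X : Polynomial (Quaternion ℝ)) • v = C (Quaternion.ofComplex c) • v := by
    rw [← hCs, ← hsm]
    exact hv.apply_eq_smul
  have h2 := hv.2
  obtain ⟨r, rfl⟩ := Submodule.mkQ_surjective M v
  refine ⟨Quaternion.ofComplex c, r, ?_, ?_⟩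
  · intro h
    exact h2 ((Submodule.Quotient.mk_eq_zero M).2 h)
  · rw [← map_smul, ← map_smul] at h1
    have := (Submodule.Quotient.eq M).1 h1
    rw [sub_mul]
    exact this

lemma rab_point (M : Ideal (Polynomial (Quaternion ℝ))) (hM : M.IsMaximal) (hM0 : M ≠ ⊥) :
    ∃ p : Quaternion ℝ, X - C p ∈ M := by
  obtain ⟨l, r, hr, hlr⟩ := rab_eigen M hM.ne_top hM0
  have hstep : ∀ q : Quaternion ℝ, X * (C q * r) = C q * ((X - C l) * r) + C (q * l) * r := by
    intro q
    rw [sub_mul, mul_sub, C_mul, mul_assoc, sub_add_cancel, ← mul_assoc, X_mul_C, mul_assoc]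
  -- the left ideal of all `f` with `f * r` congruent to a constant times `r`
  have hconst : ∀ f : Polynomial (Quaternion ℝ), ∃ q : Quaternion ℝ, f * r - C q * r ∈ M := by
    intro f
    induction f using Polynomial.induction_on with
    | C a => exact ⟨a, by simp⟩
    | add f g hf hg =>
      obtain ⟨a, ha⟩ := hf
      obtain ⟨b, hb⟩ := hg
      refine ⟨a + b, ?_⟩
      have := M.add_mem ha hb
      convert this using 1
      rw [C_add, add_mul, add_mul]; abel
    | monomial n a h =>
      obtain ⟨q, hq⟩ := h
      refine ⟨q * l, ?_⟩
      have h1 := M.mul_mem_left X hq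
      have h2 := M.mul_mem_left (C q) hlr
      have h3 := M.add_mem h1 h2
      convert h3 using 1
      rw [mul_sub, hstep, pow_succ', ← mul_assoc, ← mul_assoc, ← X_mul_C a]
      simp only [mul_assoc]
      abel
  have htop : M ⊔ Ideal.span {r} = ⊤ := by
    apply hM.1.2
    refine lt_of_le_of_ne le_sup_left ?_
    intro h
    apply hr
    rw [h]
    exact Ideal.mem_sup_right (Ideal.mem_span_singleton_self r)
  have h1 : (1 : Polynomial (Quaternion ℝ)) ∈ M ⊔ Ideal.span {r} := by rw [htop]; trivial
  obtain ⟨m, hm, t, ht, hmt⟩ := Submodule.mem_sup.1 h1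
  obtain ⟨f, rfl⟩ := Submodule.mem_span_singleton.1 ht
  obtain ⟨q, hq⟩ := hconst f
  rw [smul_eq_mul] at hmt
  have hqm : 1 - C q * r ∈ M := by
    have := M.add_mem hm hq
    convert this using 1
    rw [← hmt]; abel
  have hq0 : q ≠ 0 := by
    rintro rfl
    apply hM.ne_top
    rw [Ideal.eq_top_iff_one]
    simpa using hqm
  refine ⟨q * l * q⁻¹, ?_⟩
  have h3 := M.mul_mem_left (X - C (q * l * q⁻¹)) hqm
  have h4 := M.mul_mem_left (C q) hlr
  have h5 := M.add_mem h3 h4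
  convert h5 using 1
  have e : C (q * l * q⁻¹) * (C q * r) = C (q * l) * r := by
    rw [← mul_assoc, ← C_mul, mul_assoc, inv_mul_cancel₀ hq0, mul_one]
  rw [mul_sub, mul_one, sub_mul _ _ (C q * r), hstep, e]
  abel

theorem rabinowitsch_step (I : Ideal (Polynomial (Quaternion ℝ)))
    (F : Polynomial (Quaternion ℝ))
    (hF : ∀ p : Quaternion ℝ, (∀ G ∈ I, G.eval p = 0) → F.eval p = 0) :
    Ideal.span ((Polynomial.C '' (I : Set (Polynomial (Quaternion ℝ)))) ∪
        {Polynomial.C F * Polynomial.X - 1}) =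
      (⊤ : Ideal (Polynomial (Polynomial (Quaternion ℝ)))) := by
  set J := Ideal.span ((Polynomial.C '' (I : Set (Polynomial (Quaternion ℝ)))) ∪
        {Polynomial.C F * Polynomial.X - 1}) with hJ
  have hIJ : ∀ G ∈ I, C G ∈ J := fun G hG => Ideal.subset_span (Or.inl ⟨G, hG, rfl⟩)
  have hFJ : C F * X - 1 ∈ J := Ideal.subset_span (Or.inr rfl)
  -- multiplication by `C F * X` on the right is the identity modulo `J`
  have hiff : ∀ a, a * (C F * X) ∈ J ↔ a ∈ J := by
    intro a
    have h := J.mul_mem_left a hFJ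
    rw [mul_sub, mul_one] at h
    constructor
    · intro h1
      have := J.sub_mem h1 h
      simpa using this
    · intro h1
      have := J.add_mem h h1
      simpa using this
  have hdesc : ∀ m : ℕ, X ^ m ∈ J → (1 : Polynomial (Polynomial (Quaternion ℝ))) ∈ J := by
    intro m
    induction m with
    | zero => intro h; simpa using h
    | succ m ih =>
      intro h
      apply ih
      rw [← hiff]
      have := J.mul_mem_left (C F) h
      convert this using 1
      rw [pow_succ, ← mul_assoc, ← mul_assoc, X_pow_mul_C]
  have hup : ∀ (r : Polynomial (Quaternion ℝ)) (m k : ℕ), m ≤ k → C r * X ^ m ∈ J →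
      C r * X ^ k ∈ J := by
    intro r m k hmk h
    obtain ⟨d, rfl⟩ := Nat.exists_eq_add_of_le hmk
    have := J.mul_mem_left (X ^ d) h
    convert this using 1
    rw [← mul_assoc, X_pow_mul_C, mul_assoc, ← pow_add, add_comm]
  let L : Ideal (Polynomial (Quaternion ℝ)) :=
    { carrier := {r | ∃ m : ℕ, C r * X ^ m ∈ J}
      zero_mem' := ⟨0, by simp⟩
      add_mem' := by
        rintro a b ⟨m, hm⟩ ⟨k, hk⟩
        refine ⟨max m k, ?_⟩
        rw [C_add, add_mul]
        exact J.add_mem (hup _ _ _ (le_max_left _ _) hm) (hup _ _ _ (le_max_right _ _) hk)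
      smul_mem' := by
        rintro c a ⟨m, hm⟩
        refine ⟨m, ?_⟩
        rw [smul_eq_mul, C_mul, mul_assoc]
        exact J.mul_mem_left _ hm }
  have hL : ∀ r, r ∈ L ↔ ∃ m : ℕ, C r * X ^ m ∈ J := fun r => Iff.rfl
  have hIL : I ≤ L := fun G hG => ⟨0, by simpa using hIJ G hG⟩
  have hcomm : ∀ (r : Polynomial (Quaternion ℝ)) (m : ℕ),
      C (r * F) * X ^ (m + 1) = C r * X ^ m * (C F * X) := by
    intro r m
    rw [C_mul, mul_assoc, mul_assoc, ← mul_assoc (X ^ m), X_pow_mul_C, mul_assoc, pow_succ]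
  have hLF : ∀ r, r * F ∈ L ↔ r ∈ L := by
    intro r
    rw [hL, hL]
    constructor
    · rintro ⟨m, hm⟩
      refine ⟨m, ?_⟩
      rw [← hiff, ← hcomm]
      exact hup _ _ _ (Nat.le_succ m) hm
    · rintro ⟨m, hm⟩
      refine ⟨m + 1, ?_⟩
      rw [hcomm, hiff]
      exact hm
  rw [Ideal.eq_top_iff_one]
  by_cases h1L : (1 : Polynomial (Quaternion ℝ)) ∈ L
  · obtain ⟨m, hm⟩ := (hL _).1 h1L
    exact hdesc m (by simpa using hm)
  exfalso
  have hLtop : L ≠ ⊤ := fun h => h1L ((Ideal.eq_top_iff_one _).1 h)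
  have hLbot : L ≠ ⊥ := by
    intro h
    have hI : I = ⊥ := le_bot_iff.1 (h ▸ hIL)
    have hz : ∀ p : Quaternion ℝ, F.eval p = 0 := by
      intro p
      apply hF
      intro G hG
      rw [hI] at hG
      rw [(Submodule.mem_bot _).1 hG, eval_zero]
    have hF0 : F = 0 := rab_zero F hz
    apply h1L
    rw [← hLF, hF0, mul_zero]
    exact L.zero_mem
  have hfin := rab_finite L hLbot
  let φ : (Polynomial (Quaternion ℝ) ⧸ L) →ₗ[Polynomial (Quaternion ℝ)]
      (Polynomial (Quaternion ℝ) ⧸ L) :=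
    Submodule.mapQ L L (LinearMap.toSpanSingleton _ _ F) (fun r hr => (hLF r).2 hr)
  have hinj : Function.Injective (φ.restrictScalars (Quaternion ℝ)) := by
    rw [injective_iff_map_eq_zero]
    intro v hv
    obtain ⟨r, rfl⟩ := Submodule.mkQ_surjective L v
    exact (Submodule.Quotient.mk_eq_zero L).2
      ((hLF r).1 ((Submodule.Quotient.mk_eq_zero L).1 hv))
  have hsurj := LinearMap.surjective_of_injective hinj
  obtain ⟨v, hv⟩ := hsurj (Submodule.mkQ L 1)
  obtain ⟨r, rfl⟩ := Submodule.mkQ_surjective L v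
  have hr : r * F - 1 ∈ L := (Submodule.Quotient.eq L).1 hv
  obtain ⟨M, hM, hLM⟩ := Ideal.exists_le_maximal L hLtop
  obtain ⟨p, hp⟩ := rab_point M hM (fun h => hLbot (le_bot_iff.1 (h ▸ hLM)))
  have hFp : F.eval p = 0 := by
    apply hF
    intro G hG
    have h1 := rab_sub_mem p M hp G
    have h2 := M.sub_mem (hLM (hIL hG)) h1
    rw [sub_sub_cancel] at h2
    by_contra hne
    apply hM.ne_top
    rw [Ideal.eq_top_iff_one]
    have := M.mul_mem_left (C (G.eval p)⁻¹) h2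
    rwa [← C_mul, inv_mul_cancel₀ hne, C_1] at this
  have hFM : F ∈ M := by
    have := rab_sub_mem p M hp F
    rwa [hFp, C_0, sub_zero] at this
  apply hM.ne_top
  rw [Ideal.eq_top_iff_one]
  have := M.sub_mem (M.mul_mem_left r hFM) (hLM hr)
  simpa using this
end
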